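/- For all restriction-free FNM processes p, q, r, the following laws of parallel composition hold up to structure-preserving bisimilarity: p | (q | r) ~sp (p | q) | r (associativity); p | q ~sp q | p (commutativity); and p | 0 ~sp p (identity). -/

import Mathlib

/-- Actions of FNM: the invisible action τ, input actions `a ∈ L` and
output actions `ā ∈ L̄` (here `α` plays the role of the finite set `L`). -/
inductive Act (α : Type) where
  | tau : Act α
  | inp : α → Act α
  | out : α → Act α
  deriving DecidableEq

/-- (Open) FNM terms: `0`, the variable `x`, action prefixing `mu.t`, strong
prefixing `a̲.s`, choice `s+s`, constants `C`, parallel `t|t` and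
restriction `(νa)p`.  The syntactic categories are carved out below. -/
inductive FNM (α κ : Type) where
  | nil : FNM α κ
  | var : FNM α κ
  | pref : Act α → FNM α κ → FNM α κ
  | spref : α → FNM α κ → FNM α κ
  | sum : FNM α κ → FNM α κ → FNM α κ
  | const : κ → FNM α κ
  | par : FNM α κ → FNM α κ → FNM α κ
  | res : α → FNM α κ → FNM α κ
  deriving DecidableEq

namespace FNM

variable {α κ : Type}

mutual
  /-- Guarded terms: syntactic category `s ::= 0 | mu.t | a̲.s | s+s`
  (with `t` restriction-free). -/
  def Grd : FNM α κ → Prop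
    | .nil => True
    | .var => False
    | .pref _ t => RF t
    | .spref _ s => Grd s
    | .sum s1 s2 => Grd s1 ∧ Grd s2
    | .const _ => False
    | .par _ _ => False
    | .res _ _ => False
  /-- Restriction-free terms: syntactic category `t ::= q | t|t`, where
  `q ::= s | C | x` is the category of sequential terms. -/
  def RF : FNM α κ → Prop
    | .nil => True
    | .var => True
    | .pref _ t => RF t
    | .spref _ s => Grd s
    | .sum s1 s2 => Grd s1 ∧ Grd s2
    | .const _ => True
    | .par t1 t2 => RF t1 ∧ RF t2
    | .res _ _ => False
end

/-- Sequential terms: `q ::= s | C | x`. -/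
def Seq (t : FNM α κ) : Prop :=
  Grd t ∨ (∃ c, t = FNM.const c) ∨ t = FNM.var

/-- General terms: `p ::= t | (νa)p`. -/
def Gen : FNM α κ → Prop
  | .res _ p => Gen p
  | t => RF t

/-- Closed terms: no occurrence of the variable. -/
def VarFree : FNM α κ → Prop
  | .nil => True
  | .var => False
  | .pref _ t => VarFree t
  | .spref _ s => VarFree s
  | .sum s1 s2 => VarFree s1 ∧ VarFree s2
  | .const _ => True
  | .par t1 t2 => VarFree t1 ∧ VarFree t2
  | .res _ p => VarFree p

/-- Substitution `p{r/x}` of the term `r` for every occurrence of the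
variable `x` in `p` (constants are dealt with via the environment). -/
def subst (r : FNM α κ) : FNM α κ → FNM α κ
  | .nil => .nil
  | .var => r
  | .pref mu t => .pref mu (subst r t)
  | .spref a s => .spref a (subst r s)
  | .sum s1 s2 => .sum (subst r s1) (subst r s2)
  | .const c => .const c
  | .par t1 t2 => .par (subst r t1) (subst r t2)
  | .res a p => .res a (subst r p)

/-- `mu` uses the name `a`. -/
def _root_.Act.uses (a : α) : Act α → Prop
  | .tau => False
  | .inp b => b = a
  | .out b => b = a

/-- `a` occurs free in a term (through an environment `env` giving the body
of each process constant). -/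
inductive FreeIn (env : κ → FNM α κ) (a : α) : FNM α κ → Prop where
  | pref_act {mu : Act α} {t : FNM α κ} : mu.uses a → FreeIn env a (.pref mu t)
  | pref_cont {mu : Act α} {t : FNM α κ} : FreeIn env a t → FreeIn env a (.pref mu t)
  | spref_act {s : FNM α κ} : FreeIn env a (.spref a s)
  | spref_cont {b : α} {s : FNM α κ} : FreeIn env a s → FreeIn env a (.spref b s)
  | sum_l {s1 s2 : FNM α κ} : FreeIn env a s1 → FreeIn env a (.sum s1 s2)
  | sum_r {s1 s2 : FNM α κ} : FreeIn env a s2 → FreeIn env a (.sum s1 s2)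
  | par_l {t1 t2 : FNM α κ} : FreeIn env a t1 → FreeIn env a (.par t1 t2)
  | par_r {t1 t2 : FNM α κ} : FreeIn env a t2 → FreeIn env a (.par t1 t2)
  | res {b : α} {p : FNM α κ} : a ≠ b → FreeIn env a p → FreeIn env a (.res b p)
  | const {c : κ} : FreeIn env a (env c) → FreeIn env a (.const c)

/-- `a` occurs bound (by a restriction) in a term. -/
inductive BoundIn (env : κ → FNM α κ) (a : α) : FNM α κ → Prop where
  | res_here {p : FNM α κ} : BoundIn env a (.res a p)
  | res_in {b : α} {p : FNM α κ} : BoundIn env a p → BoundIn env a (.res b p)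
  | pref {mu : Act α} {t : FNM α κ} : BoundIn env a t → BoundIn env a (.pref mu t)
  | spref {b : α} {s : FNM α κ} : BoundIn env a s → BoundIn env a (.spref b s)
  | sum_l {s1 s2 : FNM α κ} : BoundIn env a s1 → BoundIn env a (.sum s1 s2)
  | sum_r {s1 s2 : FNM α κ} : BoundIn env a s2 → BoundIn env a (.sum s1 s2)
  | par_l {t1 t2 : FNM α κ} : BoundIn env a t1 → BoundIn env a (.par t1 t2)
  | par_r {t1 t2 : FNM α κ} : BoundIn env a t2 → BoundIn env a (.par t1 t2)
  | const {c : κ} : BoundIn env a (env c) → BoundIn env a (.const c)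

end FNM

/-- A place of the net `N_FNM`: a sequential (extended) term, rendered as a
pure sequential term together with the record `ρ : α → Bool` of which names
have been replaced by their restricted counterparts (`ρ a = true` represents
the substitution `{a'/a}`). -/
abbrev Place (α κ : Type) := FNM α κ × (α → Bool)

namespace FNM

variable {α κ : Type} [DecidableEq α] [DecidableEq κ] [Fintype α]

/-- The decomposition function `dec`, mapping (extended) terms to markings:
`dec(0) = θ`, `dec(p|q) = dec(p) ⊕ dec(q)`, `dec((νa)p) = dec(p){a'/a}`, and
a sequential term other than `0` is mapped to a single place. -/
def dec (ρ : α → Bool) : FNM α κ → Multiset (Place α κ)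
  | .nil => 0
  | .par t1 t2 => dec ρ t1 + dec ρ t2
  | .res a p => dec (Function.update ρ a true) p
  | t => {(t, ρ)}

end FNM

/-- Extended visible actions: inputs and outputs, possibly restricted
(`inp a true` represents `a'`, `out a false` represents `ā`, etc.). -/
inductive XAct (α : Type) where
  | inp : α → Bool → XAct α
  | out : α → Bool → XAct α

/-- Labels of net transitions: `τ` is the empty sequence, and otherwise a
sequence of extended actions. -/
abbrev Lbl (α : Type) := List (XAct α)

/-- An extended action carries no restricted name. -/
def XAct.unres {α : Type} : XAct α → Prop
  | .inp _ r => r = false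
  | .out _ r => r = false

/-- The label contributed by prefix `mu` under the restriction record `ρ`. -/
def actL {α : Type} (ρ : α → Bool) : Act α → Lbl α
  | .tau => []
  | .inp a => [XAct.inp a (ρ a)]
  | .out a => [XAct.out a (ρ a)]

/-- The synchronization relation `Sync(σ1, σ2, σ)`: `Sync(α, ᾱ, τ)`,
`Sync(aσ, ā, σ)` and `Sync(ā, aσ, σ)` for `σ ≠ ε` (also on restricted
actions). -/
inductive Sync {α : Type} : Lbl α → Lbl α → Lbl α → Prop where
  | inout (a : α) (r : Bool) : Sync [XAct.inp a r] [XAct.out a r] []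
  | outin (a : α) (r : Bool) : Sync [XAct.out a r] [XAct.inp a r] []
  | seqL (a : α) (r : Bool) (σ : Lbl α) :
      σ ≠ [] → Sync (XAct.inp a r :: σ) [XAct.out a r] σ
  | seqR (a : α) (r : Bool) (σ : Lbl α) :
      σ ≠ [] → Sync [XAct.out a r] (XAct.inp a r :: σ) σ

namespace FNM

variable {α κ : Type} [DecidableEq α] [DecidableEq κ] [Fintype α]

/-- A marking is admissible if for no name `a` both `a` and its restricted
counterpart `a'` occur free in it. -/
def Adm (env : κ → FNM α κ) (m : Multiset (Place α κ)) : Prop :=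
  ∀ a : α, ¬ ((∃ p ∈ m, FreeIn env a p.1 ∧ p.2 a = false) ∧
              (∃ p ∈ m, FreeIn env a p.1 ∧ p.2 a = true))

/-- The net transitions of `N_FNM`, generated by the rules (pref), (sum₁),
(sum₂), (cons), (s-pref) and (s-com). -/
inductive Tr (env : κ → FNM α κ) :
    Multiset (Place α κ) → Lbl α → Multiset (Place α κ) → Prop where
  | pref (ρ : α → Bool) (mu : Act α) (t : FNM α κ) :
      Tr env {(FNM.pref mu t, ρ)} (actL ρ mu) (dec ρ t)
  | sum1 (ρ : α → Bool) (s1 s2 : FNM α κ) (σ : Lbl α) (m : Multiset (Place α κ)) :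
      Tr env (dec ρ s1) σ m → Tr env {(FNM.sum s1 s2, ρ)} σ m
  | sum2 (ρ : α → Bool) (s1 s2 : FNM α κ) (σ : Lbl α) (m : Multiset (Place α κ)) :
      Tr env (dec ρ s2) σ m → Tr env {(FNM.sum s1 s2, ρ)} σ m
  | cons (ρ : α → Bool) (c : κ) (σ : Lbl α) (m : Multiset (Place α κ)) :
      Tr env (dec ρ (env c)) σ m → Tr env {(FNM.const c, ρ)} σ m
  | spref (ρ : α → Bool) (a : α) (s : FNM α κ) (σ : Lbl α) (m : Multiset (Place α κ)) :
      Tr env (dec ρ s) σ m →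
      Tr env {(FNM.spref a s, ρ)} (XAct.inp a (ρ a) :: σ) m
  | scom (m1 m2 m1' m2' : Multiset (Place α κ)) (σ1 σ2 σ : Lbl α) :
      Tr env m1 σ1 m1' → Tr env m2 σ2 m2' →
      Adm env (m1 + m2) → Sync σ1 σ2 σ →
      Tr env (m1 + m2) σ (m1' + m2')

/-- Tritions of the net `N_FNM`: only those whose label contains no
restricted action are kept. -/
def NetTr (env : κ → FNM α κ) (m : Multiset (Place α κ)) (σ : Lbl α)
    (m' : Multiset (Place α κ)) : Prop :=
  Tr env m σ m' ∧ ∀ x ∈ σ, x.unres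

/-- First projection of a linking. -/
def pi1 (l : Multiset (Place α κ × Place α κ)) : Multiset (Place α κ) :=
  l.map Prod.fst

/-- Second projection of a linking. -/
def pi2 (l : Multiset (Place α κ × Place α κ)) : Multiset (Place α κ) :=
  l.map Prod.snd

/-- Structure-preserving bisimulation on the net `N_FNM`. -/
def IsSPB (env : κ → FNM α κ) (R : Set (Multiset (Place α κ × Place α κ))) : Prop :=
  ∀ l ∈ R, ∀ c ≤ l,
    (∀ σ m1, NetTr env (pi1 c) σ m1 →
      ∃ m2 cb, NetTr env (pi2 c) σ m2 ∧
        pi1 cb = m1 ∧ pi2 cb = m2 ∧ l - c + cb ∈ R) ∧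
    (∀ σ m2, NetTr env (pi2 c) σ m2 →
      ∃ m1 cb, NetTr env (pi1 c) σ m1 ∧
        pi1 cb = m1 ∧ pi2 cb = m2 ∧ l - c + cb ∈ R)

/-- `p ~sp q`: some structure-preserving bisimulation contains a linking
projecting on `dec(p)` and `dec(q)`. -/
def SPEq (env : κ → FNM α κ) (p q : FNM α κ) : Prop :=
  ∃ R, IsSPB env R ∧ ∃ l ∈ R,
    pi1 l = dec (fun _ => false) p ∧ pi2 l = dec (fun _ => false) q

end FNM

/-!
The decomposition of `p | q` is the multiset sum of the decompositions of `p` and `q`, and that of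
`0` is empty. Hence the two sides of each law decompose to the same marking, by the laws of the
commutative monoid of multisets, and linking every place with itself is a structure-preserving
bisimulation.
-/

namespace FNM

section IdLinking

variable {α κ : Type} {l l₁ l₂ c : Multiset (Place α κ × Place α κ)}

/-- The identity linking on a marking `m`, in which every token is linked with itself. It
relates two copies of `m`, both at the start and after matching a transition by itself. -/
def idLinking (m : Multiset (Place α κ)) : Multiset (Place α κ × Place α κ) :=
  m.map Function.diag

/-- A linking is an identity linking if it only pairs places with themselves. The
pointwise form, equivalent to `l = idLinking m` for some `m`, passes immediately to sublinkings and
sums, hence to the linkings `l - c + cb` of the bisimulation game. -/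
def IsIdLinking (l : Multiset (Place α κ × Place α κ)) : Prop :=
  ∀ x ∈ l, x.1 = x.2

@[simp]
theorem pi1_idLinking (m : Multiset (Place α κ)) : pi1 (idLinking m) = m := by
  simp [pi1, idLinking, Function.diag]

@[simp]
theorem pi2_idLinking (m : Multiset (Place α κ)) : pi2 (idLinking m) = m := by
  simp [pi2, idLinking, Function.diag]

theorem isIdLinking_idLinking (m : Multiset (Place α κ)) : IsIdLinking (idLinking m) :=
  Multiset.forall_mem_map_iff.2 fun _ _ => rfl

theorem IsIdLinking.mono (hl : IsIdLinking l) (hc : c ≤ l) : IsIdLinking c :=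
  fun x hx => hl x (Multiset.mem_of_le hc hx)

theorem IsIdLinking.add (h₁ : IsIdLinking l₁) (h₂ : IsIdLinking l₂) : IsIdLinking (l₁ + l₂) :=
  fun x hx => (Multiset.mem_add.1 hx).elim (h₁ x) (h₂ x)

theorem IsIdLinking.pi1_eq_pi2 (hl : IsIdLinking l) : pi1 l = pi2 l :=
  Multiset.map_congr rfl hl

end IdLinking

section Dec

variable {α κ : Type} [DecidableEq α] (ρ : α → Bool)

theorem dec_nil : dec ρ (.nil : FNM α κ) = 0 :=
  rfl

theorem dec_par (p q : FNM α κ) : dec ρ (.par p q) = dec ρ p + dec ρ q :=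
  rfl

end Dec

variable {α κ : Type} [DecidableEq α] [DecidableEq κ] [Fintype α]

theorem isSPB_isIdLinking (env : κ → FNM α κ) : IsSPB env {l | IsIdLinking l} := by
  intro l hl c hc
  have hproj : pi1 c = pi2 c := (hl.mono hc).pi1_eq_pi2
  have hnext (m : Multiset (Place α κ)) : IsIdLinking (l - c + idLinking m) :=
    (hl.mono (Multiset.sub_le_self l c)).add (isIdLinking_idLinking m)
  constructor <;> exact fun σ m hm =>
    ⟨m, idLinking m, hproj ▸ hm, pi1_idLinking m, pi2_idLinking m, hnext m⟩

theorem SPEq.of_dec_eq (env : κ → FNM α κ) {p q : FNM α κ}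
    (h : dec (fun _ => false) p = dec (fun _ => false) q) : SPEq env p q :=
  ⟨{l | IsIdLinking l}, isSPB_isIdLinking env, idLinking (dec (fun _ => false) p),
    isIdLinking_idLinking _, pi1_idLinking _, (pi2_idLinking _).trans h⟩

theorem speq_par_assoc (env : κ → FNM α κ) (p q r : FNM α κ) :
    SPEq env (.par p (.par q r)) (.par (.par p q) r) :=
  .of_dec_eq env (by simp only [dec_par, add_assoc])

theorem speq_par_comm (env : κ → FNM α κ) (p q : FNM α κ) : SPEq env (.par p q) (.par q p) :=
  .of_dec_eq env (by rw [dec_par, dec_par, add_comm])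

theorem speq_par_nil (env : κ → FNM α κ) (p : FNM α κ) : SPEq env (.par p .nil) p :=
  .of_dec_eq env (by rw [dec_par, dec_nil, add_zero])

theorem speq_parallel_laws_general (env : κ → FNM α κ) (p q r : FNM α κ) :
    SPEq env (.par p (.par q r)) (.par (.par p q) r) ∧
    SPEq env (.par p q) (.par q p) ∧
    SPEq env (.par p .nil) p :=
  ⟨speq_par_assoc env p q r, speq_par_comm env p q, speq_par_nil env p⟩

end FNM

open FNM in
/-- laws of the parallel operator, up to structure-preserving
bisimilarity: associativity, commutativity and identity (`p | 0 ~sp p`), for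
all restriction-free FNM processes `p, q, r`. -/
theorem speq_parallel_laws {α κ : Type} [DecidableEq α] [DecidableEq κ]
    [Fintype α] [Finite κ]
    (env : κ → FNM α κ) (henv : ∀ c, Grd (env c) ∧ VarFree (env c))
    (p q r : FNM α κ) (hp : RF p) (hq : RF q) (hr : RF r)
    (hpv : VarFree p) (hqv : VarFree q) (hrv : VarFree r) :
    SPEq env (FNM.par p (FNM.par q r)) (FNM.par (FNM.par p q) r) ∧
    SPEq env (FNM.par p q) (FNM.par q p) ∧
    SPEq env (FNM.par p FNM.nil) p :=
  speq_parallel_laws_general env p q r
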